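/- There exists an absolute constant C > 0 such that the following holds. For every odd k ≥ 3 and all n, B ∈ ℕ with n ≥ k·B and k ≤ B, for truly random hash and sign functions h_1,...,h_k : {1,...,n} → {1,...,B} and s_1,...,s_k : {1,...,n} → {−1,1}, and for every i ∈ {1,...,n}, the Count-Sketch estimate f̃_i of the Zipfian frequency f_i = 1/i satisfies E[|f̃_i − f_i|] ≤ C/(B·√k). -/

import Mathlib

/-- Expectation of a real-valued random variable on a finite probability space
with the uniform distribution. -/
noncomputable def expUnif {Ω : Type*} [Fintype Ω] (X : Ω → ℝ) : ℝ :=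
  (∑ ω : Ω, X ω) / (Fintype.card Ω : ℝ)

/-- Zipfian frequency of the item indexed by `i : Fin n` (representing item `i+1`):
`f_{i+1} = 1/(i+1)`. -/
noncomputable def zipf {n : ℕ} (i : Fin n) : ℝ := ((i : ℝ) + 1)⁻¹

/-- The sign `±1` encoded by a boolean. -/
def sgn (b : Bool) : ℝ := if b then 1 else -1

/-- The median of `k` real numbers (for odd `k` this is the usual median). -/
noncomputable def medianFin {k : ℕ} (v : Fin k → ℝ) : ℝ :=
  (List.insertionSort (· ≤ ·) (List.ofFn v)).getD (k / 2) 0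

/-- The `k`-row Count-Sketch estimate of item `i`:
`median_ℓ s_ℓ(i) · Σ_j 1[h_ℓ(j)=h_ℓ(i)]·s_ℓ(j)·f_j`. -/
noncomputable def csEst {n B k : ℕ} (f : Fin n → ℝ) (h : Fin k → Fin n → Fin B)
    (s : Fin k → Fin n → Bool) (i : Fin n) : ℝ :=
  medianFin (fun ℓ : Fin k =>
    sgn (s ℓ i) * ∑ j : Fin n, if h ℓ j = h ℓ i then sgn (s ℓ j) * f j else 0)

/-!
After shifting buckets and multiplying signs by those of item `i`, the signed error of one row is
`∑ j ≠ i, ζ j * f j` with i.i.d. `ζ j ∈ {-1, 0, 1}`, nonzero with probability `1 / B`. For `B ≥ 2`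
each `ζ j` is a difference of two i.i.d. Bernoulli variables of parameter `p ≤ 1 / B`, so the row
error is `Z - Z'` for i.i.d. weighted Bernoulli sums `Z`, `Z'`. Truncating the frequencies at `τ`
and applying Chebyshev's inequality shows that `Z` lies within `τ` of some center up to probability
`s / τ`, where `s = 4 / B`.

If two independent copies of `Z` fall into the same interval of length `u * s`, then
`|Z - Z'| ≤ u * s`; by Cauchy–Schwarz this has probability at least a multiple of `u` for `u ≤ 1`.
As `Z - Z'` is symmetric, it exceeds `u * s` with probability at most `1 / 2 - c * u`, and also at
most `2 / u`. A Chernoff bound for `k` independent rows then keeps the median below `u * s` except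
with probability `2 * (1 + c * u ^ 2) ^ (-k / 4)`; integrating over `u` gives the scale `s / √k`.
-/

open Finset MeasureTheory ProbabilityTheory

section Expectation

variable {Ω : Type*} [MeasurableSpace Ω] {P : Measure Ω} [IsProbabilityMeasure P]

theorem integrableOn_Ioi_div_rpow_neg {p s : ℝ} (hp : 1 < p) (hs : 0 < s) :
    IntegrableOn (fun t => (t / s) ^ (-p)) (Set.Ioi s) := by
  refine IntegrableOn.congr_fun
    ((integrableOn_Ioi_rpow_of_lt (neg_lt_neg hp) hs).div_const (s ^ (-p))) (fun t ht => ?_)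
    measurableSet_Ioi
  exact (Real.div_rpow (hs.trans ht).le hs.le _).symm

theorem integral_Ioi_div_rpow_neg {p s : ℝ} (hp : 1 < p) (hs : 0 < s) :
    ∫ t in Set.Ioi s, (t / s) ^ (-p) = s / (p - 1) := by
  have hcongr : ∀ t ∈ Set.Ioi s, (t / s) ^ (-p) = t ^ (-p) / s ^ (-p) := fun t ht =>
    Real.div_rpow (hs.trans ht).le hs.le _
  rw [setIntegral_congr_fun measurableSet_Ioi hcongr, integral_div,
    integral_Ioi_rpow_of_lt (neg_lt_neg hp) hs, Real.rpow_add_one hs.ne', neg_add_eq_sub,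
    ← neg_sub p 1, neg_div_neg_eq]
  field_simp

theorem integral_le_of_measureReal_lt_le_rpow {Y : Ω → ℝ} {K p s : ℝ} (hY : ∀ ω, 0 ≤ Y ω)
    (hp : 1 < p) (hs : 0 < s)
    (htail : ∀ t, s < t → P.real {ω | t < Y ω} ≤ K * (t / s) ^ (-p)) :
    ∫ ω, Y ω ∂P ≤ (1 + K / (p - 1)) * s := by
  have : 0 < p - 1 := sub_pos.2 hp
  have hK : 0 ≤ K := by
    have := measureReal_nonneg.trans (htail (2 * s) (by linarith))
    exact nonneg_of_mul_nonneg_left this (by positivity)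
  by_cases hint : Integrable Y P
  swap
  · rw [integral_undef hint]
    positivity
  let g : ℝ → ℝ := fun t => (Set.Ioc 0 s).indicator (fun _ => 1) t +
    (Set.Ioi s).indicator (fun t => K * (t / s) ^ (-p)) t
  have hg₁ := IntegrableOn.integrable_indicator (μ := volume) (s := Set.Ioc 0 s)
    (f := fun _ => (1 : ℝ)) (by simp) measurableSet_Ioc
  have hg₂ := IntegrableOn.integrable_indicator
    ((integrableOn_Ioi_div_rpow_neg hp hs).const_mul K) measurableSet_Ioi
  have hg : ∀ t ∈ Set.Ioi (0 : ℝ), P.real {ω | t < Y ω} ≤ g t := by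
    intro t (ht : 0 < t)
    rcases le_or_gt t s with hts | hts
    · simp [g, ht, hts]
    · simpa [g, hts] using htail t hts
  calc ∫ ω, Y ω ∂P = ∫ t in Set.Ioi 0, P.real {ω | t < Y ω} :=
        hint.integral_eq_integral_meas_lt (ae_of_all _ hY)
    _ ≤ ∫ t in Set.Ioi 0, g t :=
        integral_mono_of_nonneg (ae_of_all _ fun _ => measureReal_nonneg)
          (hg₁.add hg₂).integrableOn ((ae_restrict_iff' measurableSet_Ioi).2 (ae_of_all _ hg))
    _ = s + K * (s / (p - 1)) := by
        rw [integral_add hg₁.integrableOn hg₂.integrableOn,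
          setIntegral_indicator measurableSet_Ioc, setIntegral_indicator measurableSet_Ioi,
          Set.inter_eq_right.2 Set.Ioc_subset_Ioi_self,
          Set.inter_eq_right.2 (Set.Ioi_subset_Ioi hs.le), integral_const_mul,
          integral_Ioi_div_rpow_neg hp hs]
        simp [hs.le]
    _ = (1 + K / (p - 1)) * s := by ring

theorem one_le_prod_ite_inv {ι : Type*} [Fintype ι] (p : ι → Prop) [DecidablePred p] {θ : ℝ}
    (hθ : 1 ≤ θ) (h : Fintype.card ι ≤ 2 * #{l | p l}) : 1 ≤ ∏ l, if p l then θ else θ⁻¹ := by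
  have hcard : #{l | ¬p l} ≤ #{l | p l} := by
    have := card_filter_add_card_filter_not (s := univ) (fun l => p l)
    rw [card_univ] at this
    omega
  rw [prod_ite, prod_const, prod_const, inv_pow, ← div_eq_mul_inv,
    one_le_div (pow_pos (one_pos.trans_le hθ) _)]
  exact pow_le_pow_right₀ hθ hcard

theorem integral_ite_mem_const {E : Type*} [MeasurableSpace E] {X : Ω → E} {S : Set E}
    [DecidablePred (· ∈ S)] (hX : AEMeasurable X P) (hS : MeasurableSet S) (a b : ℝ) :
    ∫ ω, (if X ω ∈ S then a else b) ∂P = b + (a - b) * P.real (X ⁻¹' S) := by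
  have hXS : NullMeasurableSet (X ⁻¹' S) P := hX.nullMeasurableSet_preimage hS
  have hsplit : ∀ ω, (if X ω ∈ S then a else b) =
      b + (X ⁻¹' S).indicator (fun _ => a - b) ω := fun ω => by
    by_cases h : X ω ∈ S <;> simp [h]
  simp_rw [hsplit]
  rw [integral_add (integrable_const b) ((integrable_const _).indicator₀ hXS),
    integral_indicator₀ hXS]
  simp [mul_comm]

theorem inv_add_sub_inv_mul_eq_sqrt {q θ : ℝ} (hq : 0 < q) (hq' : q < 1)
    (hθ : θ = √((1 - q) / q)) : θ⁻¹ + (θ - θ⁻¹) * q = √(4 * q * (1 - q)) := by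
  have hq1 : 0 < 1 - q := by linarith
  have hθ0 : 0 < θ := hθ ▸ Real.sqrt_pos.2 (by positivity)
  have hθsq : θ ^ 2 = (1 - q) / q := hθ ▸ Real.sq_sqrt (by positivity)
  have hmin : θ⁻¹ + (θ - θ⁻¹) * q = 2 * (1 - q) / θ := by
    rw [eq_div_iff hθ0.ne', add_mul, mul_right_comm, sub_mul, ← sq, hθsq,
      inv_mul_cancel₀ hθ0.ne']
    field_simp
    ring
  rw [hmin, eq_comm, Real.sqrt_eq_iff_mul_self_eq (by positivity) (by positivity),
    div_mul_div_comm, ← sq θ, hθsq]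
  field_simp
  ring

theorem measureReal_card_le_two_mul_card_mem_le {ι E : Type*} [Fintype ι] [MeasurableSpace E]
    {X : ι → Ω → E} {S : Set E} [DecidablePred (· ∈ S)] {q : ℝ} (hX : iIndepFun X P)
    (hXm : ∀ l, AEMeasurable (X l) P) (hS : MeasurableSet S) (hq : 0 < q) (hq' : q ≤ 1 / 2)
    (hle : ∀ l, P.real (X l ⁻¹' S) ≤ q) :
    P.real {ω | Fintype.card ι ≤ 2 * #{l | X l ω ∈ S}} ≤
      √(4 * q * (1 - q)) ^ Fintype.card ι := by
  -- `θ` minimizes the bound `q * θ + (1 - q) * θ⁻¹` on the mean of a factor.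
  set θ : ℝ := √((1 - q) / q) with hθ_def
  have hθ : 1 ≤ θ := Real.one_le_sqrt.2 <| (one_le_div hq).2 (by linarith)
  have : 0 < θ := one_pos.trans_le hθ
  have hθinv : θ⁻¹ ≤ θ := (inv_le_one_of_one_le₀ hθ).trans hθ
  let φ : E → ℝ := fun x => if x ∈ S then θ else θ⁻¹
  have hφm : Measurable φ := Measurable.ite hS measurable_const measurable_const
  have hφ0 : ∀ x, 0 ≤ φ x := fun x => by dsimp only [φ]; split_ifs <;> positivity
  have hφθ : ∀ x, φ x ≤ θ := fun x => by dsimp only [φ]; split_ifs <;> first | rfl | exact hθinv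
  have hmean : ∀ l, ∫ ω, φ (X l ω) ∂P ≤ √(4 * q * (1 - q)) := fun l =>
    calc ∫ ω, φ (X l ω) ∂P = θ⁻¹ + (θ - θ⁻¹) * P.real (X l ⁻¹' S) :=
          integral_ite_mem_const (hXm l) hS θ θ⁻¹
      _ ≤ θ⁻¹ + (θ - θ⁻¹) * q := by
          have : 0 ≤ θ - θ⁻¹ := sub_nonneg.2 hθinv
          gcongr
          exact hle l
      _ = √(4 * q * (1 - q)) := inv_add_sub_inv_mul_eq_sqrt hq (by linarith) hθ_def
  have hint : Integrable (fun ω => ∏ l, φ (X l ω)) P := by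
    refine .of_bound (aestronglyMeasurable_fun_prod _ fun l _ =>
      (hφm.comp_aemeasurable (hXm l)).aestronglyMeasurable) (∏ _ : ι, θ) (ae_of_all _ fun ω => ?_)
    rw [Real.norm_of_nonneg (prod_nonneg fun l _ => hφ0 _)]
    exact prod_le_prod (fun l _ => hφ0 _) fun l _ => hφθ _
  calc P.real {ω | Fintype.card ι ≤ 2 * #{l | X l ω ∈ S}}
      ≤ P.real {ω | 1 ≤ ∏ l, φ (X l ω)} :=
        measureReal_mono fun ω hω => one_le_prod_ite_inv _ hθ hω
    _ ≤ ∫ ω, ∏ l, φ (X l ω) ∂P := by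
        simpa using mul_meas_ge_le_integral_of_nonneg
          (ae_of_all _ fun ω => prod_nonneg fun l _ => hφ0 (X l ω)) hint 1
    _ = ∏ l, ∫ ω, φ (X l ω) ∂P :=
        hX.integral_fun_prod_comp hXm fun l => hφm.aestronglyMeasurable
    _ ≤ √(4 * q * (1 - q)) ^ Fintype.card ι :=
        (prod_le_prod (fun l _ => integral_nonneg fun ω => hφ0 (X l ω)) fun l _ => hmean l).trans_eq
          (by simp)

end Expectation

section Median

variable {k : ℕ}

theorem medianFin_eq_apply_sort (hk : 0 < k) (v : Fin k → ℝ) :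
    medianFin v = v (Tuple.sort v ⟨k / 2, Nat.div_lt_self hk one_lt_two⟩) := by
  have hsorted : (List.ofFn v).insertionSort (· ≤ ·) = List.ofFn (v ∘ Tuple.sort v) :=
    (((List.perm_insertionSort _ _).trans
      (Equiv.Perm.ofFn_comp_perm _ _).symm)).eq_of_sortedLE (List.sortedLE_insertionSort)
      (Tuple.monotone_sort v).sortedLE_ofFn
  rw [medianFin, hsorted, List.getD_eq_getElem _ _ (by simpa using Nat.div_lt_self hk one_lt_two),
    List.getElem_ofFn]
  rfl

theorem card_filter_comp_perm (v : Fin k → ℝ) (p : ℝ → Prop) [DecidablePred p]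
    (σ : Equiv.Perm (Fin k)) : #{l | p (v (σ l))} = #{l | p (v l)} :=
  card_equiv σ (by simp)

theorem le_two_mul_card_lt_of_lt_medianFin (hk : 0 < k) {v : Fin k → ℝ} {y : ℝ}
    (h : y < medianFin v) : k ≤ 2 * #{l | y < v l} := by
  have hle : #{l | v l ≤ y} ≤ k / 2 := by
    rw [medianFin_eq_apply_sort hk] at h
    rw [← card_filter_comp_perm v (· ≤ y) (Tuple.sort v)]
    exact not_lt.1 fun hlt => h.not_ge <|
      (Tuple.lt_card_le_iff_apply_le_of_monotone (j := ⟨k / 2, Nat.div_lt_self hk one_lt_two⟩)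
        (Tuple.monotone_sort v)).1 hlt
  have hsum := card_filter_add_card_filter_not (s := univ) (fun l => v l ≤ y)
  simp only [not_le, card_univ, Fintype.card_fin] at hsum
  omega

theorem le_two_mul_card_lt_of_medianFin_lt (hk : 0 < k) {v : Fin k → ℝ} {y : ℝ}
    (h : medianFin v < y) : k ≤ 2 * #{l | v l < y} := by
  have hlt : k / 2 < #{l | v l < y} := by
    rw [medianFin_eq_apply_sort hk] at h
    rw [← card_filter_comp_perm v (· < y) (Tuple.sort v)]
    exact (Tuple.lt_card_lt_iff_apply_lt_of_monotone (j := ⟨k / 2, Nat.div_lt_self hk one_lt_two⟩)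
      (Tuple.monotone_sort v)).2 h
  omega

theorem medianFin_comp_of_monotone (hk : 0 < k) {g : ℝ → ℝ} (hg : Monotone g) (v : Fin k → ℝ) :
    medianFin (g ∘ v) = g (medianFin v) := by
  rw [medianFin_eq_apply_sort hk, medianFin_eq_apply_sort hk]
  have hmono : Monotone ((g ∘ v) ∘ Tuple.sort v) := hg.comp (Tuple.monotone_sort v)
  exact (congr_fun (Tuple.comp_sort_eq_comp_iff_monotone.2 hmono) _).symm

variable {Ω : Type*} [MeasurableSpace Ω] {P : Measure Ω} [IsProbabilityMeasure P]

theorem measureReal_lt_abs_medianFin_le (hk : 0 < k) {X : Fin k → Ω → ℝ} {q t : ℝ}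
    (hX : iIndepFun X P) (hXm : ∀ l, AEMeasurable (X l) P) (hq : 0 < q) (hq' : q ≤ 1 / 2)
    (hlower : ∀ l, P.real {ω | X l ω < -t} ≤ q) (hupper : ∀ l, P.real {ω | t < X l ω} ≤ q) :
    P.real {ω | t < |medianFin (X · ω)|} ≤ 2 * √(4 * q * (1 - q)) ^ k := by
  have hub := measureReal_card_le_two_mul_card_mem_le hX hXm measurableSet_Ioi hq hq' hupper
  have hlb := measureReal_card_le_two_mul_card_mem_le hX hXm measurableSet_Iio hq hq' hlower
  simp only [Fintype.card_fin, Set.mem_Ioi, Set.mem_Iio] at hub hlb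
  calc P.real {ω | t < |medianFin (X · ω)|}
      ≤ P.real ({ω | k ≤ 2 * #{l | X l ω < -t}} ∪ {ω | k ≤ 2 * #{l | t < X l ω}}) := by
        refine measureReal_mono fun ω hω => ?_
        rcases lt_abs.1 (show t < |medianFin (X · ω)| from hω) with h | h
        · exact Or.inr (le_two_mul_card_lt_of_lt_medianFin hk h)
        · exact Or.inl (le_two_mul_card_lt_of_medianFin_lt hk (lt_neg_of_lt_neg h))
    _ ≤ _ := (measureReal_union_le _ _).trans (by rw [two_mul]; exact add_le_add hlb hub)

end Median

section Symmetrization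

/-- The law of `X - X'` for independent `X` and `X'` of law `ν`. -/
noncomputable def symmetrization (ν : Measure ℝ) : Measure ℝ :=
  (ν.prod ν).map fun z => z.1 - z.2

/-- Weak-type concentration of `ν` at scale `s`. The center may depend on `τ`, which allows
centering at truncated means when `ν` has heavy tails. -/
def WeaklyConcentrated (ν : Measure ℝ) (s : ℝ) : Prop :=
  ∀ τ, 0 < τ → ∃ m, ν.real {x | τ < |x - m|} ≤ s / τ

theorem symmetrization_real_apply {ν : Measure ℝ} {S : Set ℝ} (hS : MeasurableSet S) :
    (symmetrization ν).real S = (ν.prod ν).real {z | z.1 - z.2 ∈ S} :=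
  map_measureReal_apply measurable_sub hS

theorem map_neg_symmetrization {ν : Measure ℝ} [SFinite ν] :
    (symmetrization ν).map Neg.neg = symmetrization ν := by
  rw [symmetrization, Measure.map_map measurable_neg measurable_sub]
  conv_rhs => rw [← Measure.prod_swap, Measure.map_map measurable_sub measurable_swap]
  congr 1
  ext z
  simp

theorem symmetrization_real_Iio_neg {ν : Measure ℝ} [SFinite ν] {t : ℝ} :
    (symmetrization ν).real (Set.Iio (-t)) = (symmetrization ν).real (Set.Ioi t) := by
  conv_lhs => rw [← map_neg_symmetrization, map_measureReal_apply measurable_neg measurableSet_Iio]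
  congr 1
  ext x
  simp

variable {ν : Measure ℝ} [IsProbabilityMeasure ν] {s t : ℝ}

instance : IsProbabilityMeasure (symmetrization ν) :=
  Measure.isProbabilityMeasure_map measurable_sub.aemeasurable

theorem symmetrization_real_lt_abs (ht : 0 ≤ t) :
    (symmetrization ν).real {x | t < |x|} = 2 * (symmetrization ν).real (Set.Ioi t) := by
  have hunion : {x : ℝ | t < |x|} = Set.Iio (-t) ∪ Set.Ioi t := by
    ext x
    simp [lt_abs, or_comm, lt_neg]
  have hdisj : Disjoint (Set.Iio (-t)) (Set.Ioi t) :=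
    Set.Iio_disjoint_Ioi_of_le (by linarith)
  rw [hunion, measureReal_union hdisj measurableSet_Ioi, symmetrization_real_Iio_neg, two_mul]

theorem symmetrization_real_lt_abs_le (hν : WeaklyConcentrated ν s) (ht : 0 < t) :
    (symmetrization ν).real {x | t < |x|} ≤ 4 * s / t := by
  obtain ⟨m, hm⟩ := hν (t / 2) (half_pos ht)
  set A : Set ℝ := {x | t / 2 < |x - m|}
  have hsub : {z : ℝ × ℝ | t < |z.1 - z.2|} ⊆ A ×ˢ Set.univ ∪ Set.univ ×ˢ A := by
    intro z hz
    by_contra! h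
    simp only [A, Set.mem_union, Set.mem_prod, Set.mem_ofPred_eq, Set.mem_univ, and_true, true_and,
      not_or, not_lt] at h
    have := abs_sub_le z.1 m z.2
    rw [abs_sub_comm m] at this
    exact absurd (Set.mem_ofPred.1 hz) (by linarith)
  calc (symmetrization ν).real {x | t < |x|} = (ν.prod ν).real {z | t < |z.1 - z.2|} :=
        symmetrization_real_apply (measurableSet_lt measurable_const (by fun_prop))
    _ ≤ (ν.prod ν).real (A ×ˢ Set.univ) + (ν.prod ν).real (Set.univ ×ˢ A) :=
        (measureReal_mono hsub).trans (measureReal_union_le _ _)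
    _ = 2 * ν.real A := by simp [measureReal_prod_prod, two_mul]
    _ ≤ 2 * (s / (t / 2)) := by gcongr
    _ = 4 * s / t := by field_simp; ring

theorem sq_measureReal_preimage_le_card_mul {E κ : Type*} [MeasurableSpace E] [MeasurableSpace κ]
    [MeasurableSingletonClass κ] {μ : Measure E} [IsFiniteMeasure μ] {g : E → κ}
    (hg : Measurable g) (J : Finset κ) :
    μ.real (g ⁻¹' J) ^ 2 ≤ #J * (μ.prod μ).real {z | g z.1 = g z.2} := by
  have hfiber : ∀ j, MeasurableSet (g ⁻¹' {j}) := fun j => hg (measurableSet_singleton j)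
  have hunion : g ⁻¹' J = ⋃ j ∈ J, g ⁻¹' {j} := by ext; simp
  have hsub : ⋃ j ∈ J, (g ⁻¹' {j}) ×ˢ (g ⁻¹' {j}) ⊆ {z : E × E | g z.1 = g z.2} := by
    simp +contextual [Set.subset_def]
  have hdisj : (J : Set κ).PairwiseDisjoint fun j => (g ⁻¹' {j}) ×ˢ (g ⁻¹' {j}) :=
    fun i _ j _ hij => Set.Disjoint.set_prod_left (pairwise_disjoint_fiber g hij) _ _
  calc μ.real (g ⁻¹' J) ^ 2 ≤ (∑ j ∈ J, μ.real (g ⁻¹' {j})) ^ 2 := by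
        gcongr
        rw [hunion]
        exact measureReal_biUnion_finset_le _ _
    _ ≤ #J * ∑ j ∈ J, μ.real (g ⁻¹' {j}) ^ 2 := sq_sum_le_card_mul_sum_sq
    _ = #J * (μ.prod μ).real (⋃ j ∈ J, (g ⁻¹' {j}) ×ˢ (g ⁻¹' {j})) := by
        rw [measureReal_biUnion_finset hdisj fun j _ => (hfiber j).prod (hfiber j)]
        simp [measureReal_prod_prod, sq]
    _ ≤ #J * (μ.prod μ).real {z | g z.1 = g z.2} := by gcongr; finiteness

theorem sq_measureReal_abs_sub_le_le (ht : 0 < t) {τ : ℝ} (hτ : 0 ≤ τ) (m : ℝ) :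
    ν.real {x | |x - m| ≤ τ} ^ 2 ≤ (2 * τ / t + 1) * (symmetrization ν).real {x | |x| ≤ t} := by
  let bin : ℝ → ℤ := fun x => ⌊(x - (m - τ)) / t⌋
  have hbin : Measurable bin := by fun_prop
  have hcover : {x | |x - m| ≤ τ} ⊆ bin ⁻¹' ((Icc 0 ⌊2 * τ / t⌋ : Finset ℤ) : Set ℤ) := by
    intro x hx
    obtain ⟨hl, hu⟩ := abs_le.1 (Set.mem_ofPred.1 hx)
    simp only [bin, coe_Icc, Set.mem_preimage, Set.mem_Icc]
    exact ⟨Int.floor_nonneg.2 (div_nonneg (by linarith) ht.le),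
      Int.floor_mono (by gcongr; linarith)⟩
  have hcard : (#(Icc 0 ⌊2 * τ / t⌋) : ℝ) ≤ 2 * τ / t + 1 := by
    have hfloor : 0 ≤ ⌊2 * τ / t⌋ := Int.floor_nonneg.2 (by positivity)
    rw [Int.card_Icc, sub_zero, ← Int.cast_natCast, Int.toNat_of_nonneg (by omega)]
    push_cast
    gcongr
    exact Int.floor_le _
  have hcollide : {z : ℝ × ℝ | bin z.1 = bin z.2} ⊆ {z | |z.1 - z.2| ≤ t} := by
    intro z hz
    have := Int.abs_sub_lt_one_of_floor_eq_floor (Set.mem_ofPred.1 hz)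
    rw [← sub_div, sub_sub_sub_cancel_right, abs_div, abs_of_pos ht, div_lt_one ht] at this
    exact this.le
  calc ν.real {x | |x - m| ≤ τ} ^ 2
      ≤ ν.real (bin ⁻¹' (Icc 0 ⌊2 * τ / t⌋ : Finset ℤ)) ^ 2 := by gcongr; finiteness
    _ ≤ #(Icc 0 ⌊2 * τ / t⌋) * (ν.prod ν).real {z | bin z.1 = bin z.2} :=
        sq_measureReal_preimage_le_card_mul hbin _
    _ ≤ (2 * τ / t + 1) * (ν.prod ν).real {z | |z.1 - z.2| ≤ t} := by gcongr; finiteness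
    _ = (2 * τ / t + 1) * (symmetrization ν).real {x | |x| ≤ t} := by
        rw [symmetrization_real_apply (measurableSet_le (by fun_prop) measurable_const)]
        rfl

theorem le_symmetrization_real_abs_le (hν : WeaklyConcentrated ν s) (hs : 0 < s) {u : ℝ}
    (hu : 0 < u) : min u 1 / 20 ≤ (symmetrization ν).real {x | |x| ≤ u * s} := by
  obtain ⟨m, hm⟩ := hν (2 * s) (by positivity)
  have hhalf : 1 / 2 ≤ ν.real {x | |x - m| ≤ 2 * s} := by
    have hcompl : {x | |x - m| ≤ 2 * s} = {x | 2 * s < |x - m|}ᶜ := by ext; simp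
    rw [hcompl, probReal_compl_eq_one_sub (measurableSet_lt measurable_const (by fun_prop))]
    rw [div_mul_cancel_right₀ hs.ne'] at hm
    linarith
  set ρ := (symmetrization ν).real {x | |x| ≤ u * s}
  have hρ : 1 / 4 ≤ (4 / u + 1) * ρ :=
    calc (1 / 4 : ℝ) = (1 / 2) ^ 2 := by norm_num
      _ ≤ ν.real {x | |x - m| ≤ 2 * s} ^ 2 := by gcongr
      _ ≤ (2 * (2 * s) / (u * s) + 1) * ρ :=
          sq_measureReal_abs_sub_le_le (by positivity) (by positivity) m
      _ = (4 / u + 1) * ρ := by congr 2; field_simp; ring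
  have hbins : 4 / u + 1 ≤ 5 / min u 1 := by
    have hmin : 0 < min u 1 := lt_min hu one_pos
    have h₁ : 4 / u ≤ 4 / min u 1 := by gcongr; exact min_le_left _ _
    have h₂ : 1 ≤ 1 / min u 1 := (one_le_div hmin).2 (min_le_right _ _)
    linarith [add_div 4 1 (min u 1)]
  have hmin_le := hρ.trans (mul_le_mul_of_nonneg_right hbins measureReal_nonneg)
  rw [div_mul_eq_mul_div, le_div_iff₀ (lt_min hu one_pos)] at hmin_le
  linarith

end Symmetrization

section MedianOfSymmetrizations

theorem sq_four_mul_one_sub_mul_le_one {u q : ℝ} (hu : 0 < u) (hq : 0 ≤ q) (hq_tail : q ≤ 2 / u)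
    (hq_half : q ≤ (1 - min u 1 / 20) / 2) :
    (4 * q * (1 - q)) ^ 2 * (1 + u ^ 2 / 25600) ≤ 1 := by
  have hmin : 0 < min u 1 := lt_min hu one_pos
  set v := 4 * q * (1 - q)
  have hv0 : 0 ≤ v := by
    have : 0 ≤ 1 - q := by linarith
    positivity
  have hv_half : v ≤ 1 - (min u 1) ^ 2 / 400 := by
    nlinarith [min_le_right u 1]
  rcases le_total u 1 with hu1 | hu1
  · rw [min_eq_left hu1] at hv_half
    calc v ^ 2 * (1 + u ^ 2 / 25600) ≤ (1 - u ^ 2 / 400) * 1 * (1 + u ^ 2 / 400) := by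
          rw [sq v]
          gcongr <;> nlinarith
      _ ≤ 1 := by nlinarith [sq_nonneg (u ^ 2)]
  · rw [min_eq_right hu1] at hv_half
    have hv_tail : v * u ≤ 8 := by
      have := (le_div_iff₀ hu).1 hq_tail
      nlinarith [mul_nonneg hq hu.le]
    have : (v * u) ^ 2 ≤ 8 ^ 2 := by gcongr
    nlinarith

theorem sqrt_pow_le_rpow_neg_of_sq_mul_le_one {v y : ℝ} (hv : 0 ≤ v) (hy : 0 < y)
    (h : v ^ 2 * y ≤ 1) (k : ℕ) : √v ^ k ≤ y ^ (-(k / 4 : ℝ)) := by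
  calc √v ^ k = (v ^ 2) ^ (k / 4 : ℝ) := by
        rw [Real.sqrt_eq_rpow, ← Real.rpow_natCast, ← Real.rpow_mul hv, ← Real.rpow_natCast v 2,
          ← Real.rpow_mul hv]
        congr 1
        push_cast
        ring
    _ ≤ y⁻¹ ^ (k / 4 : ℝ) := by
        gcongr
        rwa [← one_div, le_div_iff₀ hy]
    _ = y ^ (-(k / 4 : ℝ)) := by rw [Real.inv_rpow hy.le, Real.rpow_neg hy.le]

theorem one_add_div_rpow_neg_le {x κ : ℝ} (hx : 0 < x) (hκ : 3 ≤ κ) :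
    (1 + x / κ) ^ (-(κ / 4)) ≤ (x / 3) ^ (-(3 / 4) : ℝ) := by
  have hκ0 : 0 < κ := by linarith
  have bernoulli : x / 3 ≤ (1 + x / κ) ^ (κ / 3) :=
    calc x / 3 ≤ 1 + κ / 3 * (x / κ) := by field_simp; linarith
      _ ≤ (1 + x / κ) ^ (κ / 3) :=
          one_add_mul_self_le_rpow_one_add (by linarith [div_pos hx hκ0]) (by linarith)
  calc (1 + x / κ) ^ (-(κ / 4)) = ((1 + x / κ) ^ (κ / 3)) ^ (-(3 / 4) : ℝ) := by
        rw [← Real.rpow_mul (by positivity)]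
        congr 1
        ring
    _ ≤ (x / 3) ^ (-(3 / 4) : ℝ) :=
        Real.rpow_le_rpow_of_nonpos (by positivity) bernoulli (by norm_num)

variable {Ω : Type*} [MeasurableSpace Ω] {P : Measure Ω} [IsProbabilityMeasure P]
  {ν : Measure ℝ} [IsProbabilityMeasure ν] {s : ℝ} {k : ℕ} {X : Fin k → Ω → ℝ}

theorem symmetrization_real_Ioi_le (hν : WeaklyConcentrated ν s) (hs : 0 < s) {u : ℝ}
    (hu : 0 < u) :
    (symmetrization ν).real (Set.Ioi (u * s)) ≤ min (2 / u) ((1 - min u 1 / 20) / 2) := by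
  have hsymm := symmetrization_real_lt_abs (ν := ν) (mul_pos hu hs).le
  refine le_min ?_ ?_
  · have htail := symmetrization_real_lt_abs_le hν (mul_pos hu hs)
    rw [hsymm, mul_div_mul_right _ _ hs.ne'] at htail
    linarith [mul_div_assoc 2 2 u]
  · have hball := le_symmetrization_real_abs_le hν hs hu
    have hcompl : {x : ℝ | |x| ≤ u * s} = {x | u * s < |x|}ᶜ := by ext; simp
    rw [hcompl, probReal_compl_eq_one_sub (measurableSet_lt measurable_const (by fun_prop)),
      hsymm] at hball
    linarith

theorem measureReal_lt_abs_medianFin_symmetrization_le (hν : WeaklyConcentrated ν s) (hs : 0 < s)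
    (hk : 0 < k) (hX : iIndepFun X P) (hlaw : ∀ l, HasLaw (X l) (symmetrization ν) P) {u : ℝ}
    (hu : 0 < u) :
    P.real {ω | u * s < |medianFin (X · ω)|} ≤ 2 * (1 + u ^ 2 / 25600) ^ (-(k / 4 : ℝ)) := by
  set q := min (2 / u) ((1 - min u 1 / 20) / 2)
  have hmin : 0 < min u 1 := lt_min hu one_pos
  have hq : 0 < q := lt_min (by positivity) (by linarith [min_le_right u 1])
  have hq' : q ≤ 1 / 2 := (min_le_right _ _).trans (by linarith)
  have hupper : ∀ l, P.real {ω | u * s < X l ω} ≤ q := fun l =>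
    ((hlaw l).measureReal_eq measurableSet_Ioi).trans_le (symmetrization_real_Ioi_le hν hs hu)
  have hlower : ∀ l, P.real {ω | X l ω < -(u * s)} ≤ q := fun l =>
    ((hlaw l).measureReal_eq measurableSet_Iio).trans_le <|
      symmetrization_real_Iio_neg.trans_le (symmetrization_real_Ioi_le hν hs hu)
  refine (measureReal_lt_abs_medianFin_le hk hX (fun l => (hlaw l).aemeasurable) hq hq'
    hlower hupper).trans ?_
  gcongr
  exact sqrt_pow_le_rpow_neg_of_sq_mul_le_one (mul_nonneg (by positivity) (by linarith))
    (by positivity) (sq_four_mul_one_sub_mul_le_one hu hq.le (min_le_left _ _) (min_le_right _ _)) k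

/-- A constant for the error bound of medians of symmetrizations; `76800 = 3 * 25600` collects
the constant of the one-sample tail bound and the loss in Bernoulli's inequality. -/
noncomputable def medianErrorConst : ℝ := 1 + 4 * (76800 : ℝ) ^ (3 / 4 : ℝ)

theorem integral_abs_medianFin_symmetrization_le (hν : WeaklyConcentrated ν s) (hs : 0 < s)
    (hk : 3 ≤ k) (hX : iIndepFun X P) (hlaw : ∀ l, HasLaw (X l) (symmetrization ν) P) :
    ∫ ω, |medianFin (X · ω)| ∂P ≤ medianErrorConst * (s / √k) := by
  have hk0 : (0 : ℝ) < k := by positivity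
  have hk3 : (3 : ℝ) ≤ k := mod_cast hk
  have hbound := integral_le_of_measureReal_lt_le_rpow (P := P) (p := 3 / 2) (s := s / √k)
    (K := 2 * 76800 ^ (3 / 4 : ℝ)) (Y := fun ω => |medianFin (X · ω)|) (fun _ => abs_nonneg _)
    (by norm_num) (by positivity) fun t ht => ?_
  · convert hbound using 2
    rw [medianErrorConst]
    ring
  have ht0 : 0 < t := lt_trans (by positivity) ht
  set r := t / (s / √k) with hr_def
  have hr : 0 < r := by positivity
  have ht_eq : t = r / √k * s := by rw [hr_def]; field_simp
  calc P.real {ω | t < |medianFin (X · ω)|}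
      ≤ 2 * (1 + (r / √k) ^ 2 / 25600) ^ (-(k / 4 : ℝ)) := by
        rw [ht_eq]
        exact measureReal_lt_abs_medianFin_symmetrization_le hν hs (by omega) hX hlaw
          (by positivity)
    _ = 2 * (1 + r ^ 2 / 25600 / k) ^ (-(k / 4 : ℝ)) := by
        rw [div_pow, Real.sq_sqrt hk0.le, div_right_comm]
    _ ≤ 2 * (r ^ 2 / 25600 / 3) ^ (-(3 / 4) : ℝ) := by
        gcongr
        exact one_add_div_rpow_neg_le (by positivity) hk3
    _ = 2 * 76800 ^ (3 / 4 : ℝ) * r ^ (-(3 / 2) : ℝ) := by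
        rw [div_div, Real.div_rpow (sq_nonneg r) (by norm_num),
          Real.rpow_neg (x := 25600 * 3) (by norm_num), div_inv_eq_mul, ← Real.rpow_natCast,
          ← Real.rpow_mul hr.le, mul_assoc, mul_comm (r ^ _)]
        norm_num

end MedianOfSymmetrizations

section WeightedSums

variable {Ω ι : Type*} [MeasurableSpace Ω] {P : Measure Ω} [IsProbabilityMeasure P]

theorem measureReal_le_abs_sum_sub_integral_le {ξ : ι → Ω → ℝ} {q τ : ℝ}
    (hξ : ∀ j, MemLp (ξ j) 2 P) (hindep : Pairwise fun i j => ξ i ⟂ᵢ[P] ξ j)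
    (hvar : ∀ j, Var[ξ j; P] ≤ q) (hτ : 0 < τ) (c : ι → ℝ) (J : Finset ι) :
    P.real {ω | τ ≤ |∑ j ∈ J, ξ j ω * c j - ∫ ω, ∑ j ∈ J, ξ j ω * c j ∂P|} ≤
      (q * ∑ j ∈ J, c j ^ 2) / τ ^ 2 := by
  let η : ι → Ω → ℝ := fun j ω => ξ j ω * c j
  have hη : ∀ j, MemLp (η j) 2 P := fun j => (hξ j).mul_const (c j)
  have hη_indep : Pairwise fun i j => η i ⟂ᵢ[P] η j := fun i j hij =>
    (hindep hij).comp (measurable_id.mul_const (c i)) (measurable_id.mul_const (c j))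
  have hvar_sum : Var[∑ j ∈ J, η j; P] ≤ q * ∑ j ∈ J, c j ^ 2 := by
    rw [IndepFun.variance_sum (fun j _ => hη j) fun i _ j _ hij => hη_indep hij, mul_sum]
    refine sum_le_sum fun j _ => ?_
    rw [variance_mul_const]
    exact mul_le_mul_of_nonneg_right (hvar j) (sq_nonneg _)
  have hcheb := meas_ge_le_variance_div_sq (memLp_finsetSum' J fun j _ => hη j) hτ
  simp only [Finset.sum_apply, η] at hcheb
  calc _ ≤ Var[∑ j ∈ J, η j; P] / τ ^ 2 :=
        ENNReal.toReal_le_of_le_ofReal (div_nonneg (variance_nonneg _ _) (sq_nonneg _)) hcheb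
    _ ≤ (q * ∑ j ∈ J, c j ^ 2) / τ ^ 2 := by gcongr

variable [Fintype ι]

theorem exists_measureReal_lt_abs_sum_sub_le {ξ : ι → Ω → ℝ} {q τ : ℝ}
    (hξ : ∀ j, MemLp (ξ j) 2 P) (hindep : Pairwise fun i j => ξ i ⟂ᵢ[P] ξ j)
    (hvar : ∀ j, Var[ξ j; P] ≤ q) (hsupp : ∀ j, P.real {ω | ξ j ω ≠ 0} ≤ q) (hτ : 0 < τ)
    (c : ι → ℝ) :
    ∃ m, P.real {ω | τ < |∑ j, ξ j ω * c j - m|} ≤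
      q * (∑ j, min (τ ^ 2) (c j ^ 2)) / τ ^ 2 := by
  classical
  let J : Finset ι := {j | |c j| ≤ τ}
  let m := ∫ ω, ∑ j ∈ J, ξ j ω * c j ∂P
  have hsub : {ω | τ < |∑ j, ξ j ω * c j - m|} ⊆
      {ω | τ ≤ |∑ j ∈ J, ξ j ω * c j - m|} ∪ ⋃ j ∈ Jᶜ, {ω | ξ j ω ≠ 0} := by
    intro ω hω
    by_contra! h
    simp only [Set.mem_union, Set.mem_iUnion, not_or, not_exists, Set.mem_ofPred_eq, not_le,
      not_not] at h
    have hzero : ∑ j ∈ Jᶜ, ξ j ω * c j = 0 :=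
      sum_eq_zero fun j hj => by rw [h.2 j hj, zero_mul]
    have hω' : τ < |∑ j, ξ j ω * c j - m| := hω
    rw [← sum_add_sum_compl J, hzero, add_zero] at hω'
    exact hω'.not_ge h.1.le
  have hmem : ∀ j, j ∈ J ↔ c j ^ 2 ≤ τ ^ 2 := fun j => by
    simp [J, sq_le_sq, abs_of_pos hτ]
  have hJ : ∑ j ∈ J, c j ^ 2 = ∑ j ∈ J, min (τ ^ 2) (c j ^ 2) :=
    sum_congr rfl fun j hj => (min_eq_right ((hmem j).1 hj)).symm
  have hJc : ∑ _j ∈ Jᶜ, τ ^ 2 = ∑ j ∈ Jᶜ, min (τ ^ 2) (c j ^ 2) :=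
    sum_congr rfl fun j hj => (min_eq_left
      (not_le.1 fun h => mem_compl.1 hj ((hmem j).2 h)).le).symm
  refine ⟨m, ?_⟩
  calc P.real {ω | τ < |∑ j, ξ j ω * c j - m|}
      ≤ P.real {ω | τ ≤ |∑ j ∈ J, ξ j ω * c j - m|} + ∑ j ∈ Jᶜ, P.real {ω | ξ j ω ≠ 0} :=
        (measureReal_mono hsub).trans <| (measureReal_union_le _ _).trans <|
          add_le_add_right (measureReal_biUnion_finset_le _ _) _
    _ ≤ (q * ∑ j ∈ J, c j ^ 2) / τ ^ 2 + ∑ _j ∈ Jᶜ, q :=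
        add_le_add (measureReal_le_abs_sum_sub_integral_le hξ hindep hvar hτ c J)
          (sum_le_sum fun j _ => hsupp j)
    _ = q * (∑ j ∈ J, c j ^ 2 + ∑ _j ∈ Jᶜ, τ ^ 2) / τ ^ 2 := by
        simp only [sum_const, nsmul_eq_mul]
        field_simp
    _ = q * (∑ j, min (τ ^ 2) (c j ^ 2)) / τ ^ 2 := by
        rw [hJ, hJc, sum_add_sum_compl]

theorem min_inv_sq_le {x y : ℝ} (hx : 0 < x) (hy : 1 ≤ y) :
    min (x⁻¹ ^ 2) (y⁻¹ ^ 2) ≤ 4 * ((x + y - 1)⁻¹ - (x + y)⁻¹) := by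
  have : 0 < y := by linarith
  have hxy : 0 < x + y - 1 := by linarith
  have hmax : (x + y - 1) * (x + y) ≤ 4 * max x y ^ 2 := by
    nlinarith [le_max_left x y, le_max_right x y]
  have hmin : min (x⁻¹ ^ 2) (y⁻¹ ^ 2) ≤ (max x y ^ 2)⁻¹ := by
    rcases le_total x y with h | h <;> simp [h, inv_pow]
  calc min (x⁻¹ ^ 2) (y⁻¹ ^ 2) ≤ (max x y ^ 2)⁻¹ := hmin
    _ ≤ 4 / ((x + y - 1) * (x + y)) := by
        rw [← one_div, div_le_div_iff₀ (by positivity) (by positivity)]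
        linarith
    _ = 4 * ((x + y - 1)⁻¹ - (x + y)⁻¹) := by
        rw [inv_sub_inv hxy.ne' (by positivity)]
        ring

theorem sum_min_sq_zipf_sq_le (n : ℕ) {τ : ℝ} (hτ : 0 < τ) :
    ∑ j : Fin n, min (τ ^ 2) (zipf j ^ 2) ≤ 4 * τ := by
  have hterm : ∀ j : ℕ, min (τ ^ 2) (((j : ℝ) + 1)⁻¹ ^ 2) ≤
      4 * ((τ⁻¹ + j)⁻¹ - (τ⁻¹ + (j + 1 : ℕ))⁻¹) := fun j => by
    have := min_inv_sq_le (inv_pos.2 hτ) (by simp : (1 : ℝ) ≤ j + 1)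
    rw [inv_inv, ← add_assoc, add_sub_cancel_right, add_assoc] at this
    exact_mod_cast this
  calc ∑ j : Fin n, min (τ ^ 2) (zipf j ^ 2)
      = ∑ j ∈ range n, min (τ ^ 2) (((j : ℝ) + 1)⁻¹ ^ 2) :=
        Fin.sum_univ_eq_sum_range (fun j : ℕ => min (τ ^ 2) (((j : ℝ) + 1)⁻¹ ^ 2)) n
    _ ≤ ∑ j ∈ range n, 4 * ((τ⁻¹ + j)⁻¹ - (τ⁻¹ + (j + 1 : ℕ))⁻¹) := sum_le_sum fun j _ => hterm j
    _ = 4 * (τ - (τ⁻¹ + n)⁻¹) := by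
        rw [← mul_sum, sum_range_sub' fun j : ℕ => (τ⁻¹ + (j : ℝ))⁻¹]
        simp
    _ ≤ 4 * τ := by
        have : 0 ≤ (τ⁻¹ + n)⁻¹ := by positivity
        linarith

theorem measurable_weightedSum (c : ι → ℝ) : Measurable fun x : ι → ℝ => ∑ j, x j * c j := by
  fun_prop

/-- The law of `∑ j, X j * c j` for independent `X j` of law `μ`. -/
noncomputable def weightedSumLaw (μ : Measure ℝ) (c : ι → ℝ) : Measure ℝ :=
  (Measure.pi fun _ : ι => μ).map fun x => ∑ j, x j * c j

variable {μ : Measure ℝ} [IsProbabilityMeasure μ] {c : ι → ℝ}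

instance : IsProbabilityMeasure (weightedSumLaw μ c) :=
  Measure.isProbabilityMeasure_map (measurable_weightedSum c).aemeasurable

theorem weaklyConcentrated_weightedSumLaw {q A : ℝ} (hμ : MemLp id 2 μ) (hvar : Var[id; μ] ≤ q)
    (hsupp : μ.real {0}ᶜ ≤ q)
    (hc : ∀ τ, 0 < τ → ∑ j, min (τ ^ 2) (c j ^ 2) ≤ A * τ) :
    WeaklyConcentrated (weightedSumLaw μ c) (q * A) := by
  intro τ hτ
  have hq : 0 ≤ q := (variance_nonneg _ _).trans hvar
  let π := Measure.pi fun _ : ι => μ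
  have heval : ∀ j, MeasurePreserving (Function.eval j) π μ :=
    measurePreserving_eval fun _ : ι => μ
  have hindep : iIndepFun (fun j (x : ι → ℝ) => x j) π :=
    iIndepFun_pi (X := fun _ => id) fun _ => aemeasurable_id
  obtain ⟨m, hm⟩ := exists_measureReal_lt_abs_sum_sub_le (ξ := fun j (x : ι → ℝ) => x j) (q := q)
    (fun j => hμ.comp_measurePreserving (heval j)) (fun i j hij => hindep.indepFun hij)
    (fun j => ((heval j).variance_fun_comp aemeasurable_id).trans_le hvar)
    (fun j => ((heval j).measureReal_preimage
      (measurableSet_singleton 0).compl.nullMeasurableSet).trans_le hsupp)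
    hτ c
  refine ⟨m, ?_⟩
  rw [weightedSumLaw, map_measureReal_apply (measurable_weightedSum c)
    (measurableSet_lt measurable_const (by fun_prop))]
  calc _ ≤ q * (∑ j, min (τ ^ 2) (c j ^ 2)) / τ ^ 2 := hm
    _ ≤ q * (A * τ) / τ ^ 2 := by gcongr; exact hc τ hτ
    _ = q * A / τ := by field_simp

theorem symmetrization_weightedSumLaw :
    symmetrization (weightedSumLaw μ c) = weightedSumLaw (symmetrization μ) c := by
  have hsum := measurable_weightedSum c
  have hsub : Measurable fun z : ℝ × ℝ => z.1 - z.2 := measurable_sub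
  have : ∀ _ : ι, SigmaFinite ((μ.prod μ).map fun z => z.1 - z.2) := fun _ =>
    inferInstanceAs (SigmaFinite (symmetrization μ))
  rw [symmetrization, weightedSumLaw, Measure.map_prod_map _ _ hsum hsum,
    ← (measurePreserving_arrowProdEquivProdArrow ℝ ℝ ι (fun _ => μ) fun _ => μ).map_eq,
    Measure.map_map (hsum.prodMap hsum) (MeasurableEquiv.measurable _),
    Measure.map_map hsub ((hsum.prodMap hsum).comp (MeasurableEquiv.measurable _)),
    weightedSumLaw]
  simp only [symmetrization]
  rw [← Measure.pi_map_pi (μ := fun _ : ι => μ.prod μ) fun _ => hsub.aemeasurable,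
    Measure.map_map hsum (by fun_prop)]
  congr 1
  ext x
  simp [sub_mul, MeasurableEquiv.arrowProdEquivProdArrow, Equiv.arrowProdEquivProdArrow]

end WeightedSums

section Uniform

theorem expUnif_comp_equiv {α β : Type*} [Fintype α] [Fintype β] (e : α ≃ β) (X : β → ℝ) :
    expUnif (X ∘ e) = expUnif X := by
  simp [expUnif, e.sum_comp, Fintype.card_congr e]

variable {α β ι : Type*} [Finite α] [MeasurableSpace α] [MeasurableSingletonClass α]
  [Finite β] [MeasurableSpace β] [MeasurableSingletonClass β] [Fintype ι]

instance isProbabilityMeasure_uniformOn_univ [Nonempty α] :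
    IsProbabilityMeasure (uniformOn (Set.univ : Set α)) :=
  isProbabilityMeasure_uniformOn Set.finite_univ Set.univ_nonempty

theorem integral_uniformOn_univ {κ : Type*} [Fintype κ] [Nonempty κ] [MeasurableSpace κ]
    [MeasurableSingletonClass κ] (X : κ → ℝ) : ∫ x, X x ∂uniformOn Set.univ = expUnif X := by
  rw [integral_fintype .of_finite]
  simp [measureReal_def, uniformOn_univ, expUnif, div_eq_inv_mul, mul_sum]

theorem map_equiv_uniformOn_univ (e : α ≃ β) :
    (uniformOn Set.univ : Measure α).map e = uniformOn Set.univ := by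
  cases nonempty_fintype α
  cases nonempty_fintype β
  refine Measure.ext_of_singleton fun b => ?_
  rw [Measure.map_apply (measurable_of_finite e) (measurableSet_singleton b)]
  have hfiber : e ⁻¹' {b} = {e.symm b} := by ext; simp [Equiv.eq_symm_apply]
  simp [hfiber, uniformOn_univ, Fintype.card_congr e]

theorem uniformOn_univ_pi :
    (uniformOn Set.univ : Measure (ι → α)) = Measure.pi fun _ => uniformOn Set.univ := by
  rw [← uniformOn_pi, Set.pi_univ]

variable [Nonempty α]

theorem uniformOn_univ_prod [Nonempty β] :
    (uniformOn Set.univ : Measure (α × β)) =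
      (uniformOn Set.univ : Measure α).prod (uniformOn Set.univ) := by
  cases nonempty_fintype α
  cases nonempty_fintype β
  refine Measure.ext_of_singleton fun z => ?_
  rw [← Prod.mk.eta (p := z), ← Set.singleton_prod_singleton, Measure.prod_prod]
  simp [uniformOn_univ, ENNReal.mul_inv]

theorem map_perm_apply_uniformOn_univ [DecidableEq ι] (i : ι) (σ : α → Equiv.Perm α) :
    (uniformOn Set.univ : Measure (ι → α)).map (fun x (j : {j // j ≠ i}) => σ (x i) (x j)) =
      Measure.pi fun _ => uniformOn Set.univ := by
  let e : (ι → α) ≃ α × ({j // j ≠ i} → α) := (Equiv.funSplitAt i α).trans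
    (Equiv.prodShear (Equiv.refl α) fun a => Equiv.piCongrRight fun _ => σ a)
  calc (uniformOn Set.univ : Measure (ι → α)).map (fun x (j : {j // j ≠ i}) => σ (x i) (x j))
      = ((uniformOn Set.univ : Measure (ι → α)).map e).map Prod.snd :=
        (Measure.map_map measurable_snd (measurable_of_finite e)).symm
    _ = Measure.pi fun _ => uniformOn Set.univ := by
        rw [map_equiv_uniformOn_univ, uniformOn_univ_prod, uniformOn_univ_pi]
        exact measurePreserving_snd.map_eq

end Uniform

section BernoulliMeasure

open scoped unitInterval

variable {p : I}

theorem memLp_id_bernoulliMeasure {x y : ℝ} : MemLp id 2 Ber(x, y, p) :=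
  (memLp_two_iff_integrable_sq aestronglyMeasurable_id).2 (integrable_bernoulliMeasure _ _ _ _)

theorem variance_id_bernoulliMeasure_le : Var[id; Ber((1 : ℝ), 0, p)] ≤ p := by
  refine (variance_le_expectation_sq aestronglyMeasurable_id).trans_eq ?_
  simp [integral_bernoulliMeasure]

theorem bernoulliMeasure_real_compl_zero : Ber((1 : ℝ), 0, p).real {0}ᶜ = p :=
  bernoulliMeasure_real_apply_of_mem_of_notMem p (measurableSet_singleton 0).compl (by simp)
    (by simp)

theorem exists_unitInterval_mul_one_sub_eq {x : ℝ} (hx : 0 ≤ x) (hx' : x ≤ 1 / 4) :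
    ∃ p : I, (p : ℝ) * (1 - p) = x ∧ (p : ℝ) ≤ 2 * x := by
  have hsq : √(1 - 4 * x) ^ 2 = 1 - 4 * x := Real.sq_sqrt (by linarith)
  have h0 : 0 ≤ √(1 - 4 * x) := Real.sqrt_nonneg _
  have h1 : √(1 - 4 * x) ≤ 1 := Real.sqrt_le_one.2 (by linarith)
  refine ⟨⟨(1 - √(1 - 4 * x)) / 2, by linarith, by linarith⟩, ?_, ?_⟩ <;> dsimp only
  · linear_combination -hsq / 4
  · nlinarith

end BernoulliMeasure

section CountSketch

open scoped unitInterval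

variable {n B k : ℕ}

/-- The random coefficient with which an item contributes to a row of Count-Sketch, relative to
the queried item: its sign if it falls into the same bucket, which is encoded as bucket `0`. -/
def collisionSign [NeZero B] (y : Fin B × Bool) : ℝ := if y.1 = 0 then sgn y.2 else 0

/-- The signed error of the estimate of item `i` by a single row `r`, which lists the bucket and
the sign of every item. -/
def rowError (f : Fin n → ℝ) (i : Fin n) (r : Fin n → Fin B × Bool) : ℝ :=
  ∑ j : {j // j ≠ i}, if (r j).1 = (r i).1 then sgn (r i).2 * sgn (r j).2 * f j else 0

theorem sgn_mul_sgn (s t : Bool) : sgn s * sgn t = sgn (s == t) := by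
  cases s <;> cases t <;> simp [sgn]

theorem csEst_eq_medianFin_rowError_add (hk : 0 < k) (f : Fin n → ℝ) (h : Fin k → Fin n → Fin B)
    (s : Fin k → Fin n → Bool) (i : Fin n) :
    csEst f h s i = medianFin (fun l => rowError f i fun j => (h l j, s l j)) + f i := by
  have hrow : ∀ l, sgn (s l i) * ∑ j, (if h l j = h l i then sgn (s l j) * f j else 0) =
      rowError f i (fun j => (h l j, s l j)) + f i := fun l => by
    rw [Fintype.sum_eq_add_sum_subtype_ne _ i, if_pos rfl, mul_add, ← mul_assoc, sgn_mul_sgn,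
      mul_sum, rowError]
    simp [sgn, add_comm]
  have hmono : Monotone (· + f i) := fun _ _ hxy => add_le_add_left hxy _
  rw [← medianFin_comp_of_monotone hk hmono, csEst]
  exact congrArg medianFin (funext hrow)

theorem map_collisionSign_uniformOn_univ [NeZero B] {p : I}
    (hp : (p : ℝ) * (1 - p) = 1 / (2 * B)) :
    (uniformOn Set.univ : Measure (Fin B × Bool)).map collisionSign =
      symmetrization Ber((1 : ℝ), 0, p) := by
  have hB : (B : ℝ) ≠ 0 := NeZero.ne _
  refine ext_of_forall_integral_eq_of_IsFiniteMeasure fun g => ?_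
  have hleft : ∫ x, g x ∂(uniformOn Set.univ : Measure (Fin B × Bool)).map collisionSign =
      g 0 + (g 1 + g (-1) - 2 * g 0) * (1 / (2 * B)) := by
    have hbucket : ∀ b : Fin B, g (collisionSign (b, true)) + g (collisionSign (b, false)) =
        2 * g 0 + if b = 0 then g 1 + g (-1) - 2 * g 0 else 0 := fun b => by
      by_cases hb : b = 0 <;> simp [collisionSign, sgn, hb, two_mul]
    rw [integral_map (measurable_of_finite _).aemeasurable
      g.continuous.aestronglyMeasurable, integral_uniformOn_univ, expUnif,
      Fintype.sum_prod_type]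
    simp only [Fintype.sum_bool, hbucket, sum_add_distrib, sum_ite_eq', sum_const, mem_univ,
      if_true, card_univ, nsmul_eq_mul, Fintype.card_prod, Fintype.card_fin, Fintype.card_bool]
    push_cast
    field_simp
  have hright : ∫ x, g x ∂symmetrization Ber((1 : ℝ), 0, p) =
      g 0 + (g 1 + g (-1) - 2 * g 0) * (p * (1 - p)) := by
    rw [symmetrization, integral_map measurable_sub.aemeasurable
      g.continuous.aestronglyMeasurable, integral_prod]
    · simp only [integral_bernoulliMeasure, smul_eq_mul, sub_zero, sub_self, zero_sub]
      ring
    · exact Integrable.of_bound (by fun_prop) ‖g‖ (ae_of_all _ fun z => g.norm_coe_le_norm _)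
  rw [hleft, hright, hp]

/-- Re-randomizes an item relative to the queried item: shifting by the bucket `y.1` of the
latter turns collisions into bucket `0`, and comparing with its sign `y.2` multiplies the signs. -/
def relativeHash [NeZero B] (y : Fin B × Bool) : Equiv.Perm (Fin B × Bool) :=
  Equiv.prodCongr (Equiv.subRight y.1)
    (Function.Involutive.toPerm (y.2 == ·) fun t => by cases y.2 <;> cases t <;> rfl)

theorem collisionSign_relativeHash [NeZero B] (y z : Fin B × Bool) :
    collisionSign (relativeHash y z) = if z.1 = y.1 then sgn y.2 * sgn z.2 else 0 := by
  simp [collisionSign, relativeHash, Function.Involutive.toPerm, sgn_mul_sgn, sub_eq_zero]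

theorem hasLaw_rowError [NeZero B] {p : I} (hp : (p : ℝ) * (1 - p) = 1 / (2 * B))
    (f : Fin n → ℝ) (i : Fin n) :
    HasLaw (rowError f i)
      (symmetrization (weightedSumLaw Ber((1 : ℝ), 0, p) fun j : {j // j ≠ i} => f j))
      (uniformOn (Set.univ : Set (Fin n → Fin B × Bool))) where
  aemeasurable := (measurable_of_finite _).aemeasurable
  map_eq := by
    have hsum := measurable_weightedSum fun j : {j // j ≠ i} => f j
    have hsign : Measurable (collisionSign : Fin B × Bool → ℝ) := measurable_of_finite _
    have hrow : rowError f i = (fun x => ∑ j : {j // j ≠ i}, x j * f j) ∘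
        (fun (y : {j // j ≠ i} → Fin B × Bool) j => collisionSign (y j)) ∘
          fun (r : Fin n → Fin B × Bool) j => relativeHash (r i) (r j) := by
      ext r
      simp [rowError, collisionSign_relativeHash]
    have : ∀ _ : {j // j ≠ i},
        SigmaFinite ((uniformOn Set.univ : Measure (Fin B × Bool)).map collisionSign) :=
      fun _ => map_collisionSign_uniformOn_univ hp ▸ inferInstance
    rw [symmetrization_weightedSumLaw, weightedSumLaw, hrow,
      ← Measure.map_map hsum (measurable_of_finite _),
      ← Measure.map_map (measurable_of_finite _) (measurable_of_finite _),
      map_perm_apply_uniformOn_univ, Measure.pi_map_pi fun _ => hsign.aemeasurable,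
      map_collisionSign_uniformOn_univ hp]

theorem weaklyConcentrated_weightedSumLaw_bernoulliMeasure {p : I} {q : ℝ} (hpq : p ≤ q)
    {f : Fin n → ℝ} (hf : ∀ j, |f j| ≤ zipf j) (i : Fin n) :
    WeaklyConcentrated (weightedSumLaw Ber((1 : ℝ), 0, p) fun j : {j // j ≠ i} => f j) (q * 4) := by
  refine weaklyConcentrated_weightedSumLaw memLp_id_bernoulliMeasure
    (variance_id_bernoulliMeasure_le.trans hpq) (bernoulliMeasure_real_compl_zero.trans_le hpq)
    fun τ hτ => ?_
  calc ∑ j : {j // j ≠ i}, min (τ ^ 2) (f j ^ 2)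
      ≤ ∑ j, min (τ ^ 2) (f j ^ 2) := by
        rw [Fintype.sum_eq_add_sum_subtype_ne _ i, le_add_iff_nonneg_left]
        positivity
    _ ≤ ∑ j : Fin n, min (τ ^ 2) (zipf j ^ 2) := by
        refine sum_le_sum fun j _ => min_le_min_left _ ?_
        exact sq_le_sq.2 ((hf j).trans (le_abs_self _))
    _ ≤ 4 * τ := sum_min_sq_zipf_sq_le n hτ

theorem expUnif_abs_csEst_sub [NeZero B] (hk : 0 < k) (f : Fin n → ℝ) (i : Fin n) :
    expUnif (fun ω : (Fin k → Fin n → Fin B) × (Fin k → Fin n → Bool) =>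
        |csEst f ω.1 ω.2 i - f i|) =
      ∫ r, |medianFin fun l => rowError f i (r l)|
        ∂Measure.pi fun _ : Fin k => uniformOn (Set.univ : Set (Fin n → Fin B × Bool)) := by
  let e : (Fin k → Fin n → Fin B) × (Fin k → Fin n → Bool) ≃ (Fin k → Fin n → Fin B × Bool) :=
    (Equiv.arrowProdEquivProdArrow _ _ _).symm.trans
      (Equiv.piCongrRight fun _ => (Equiv.arrowProdEquivProdArrow _ _ _).symm)
  rw [← uniformOn_univ_pi, integral_uniformOn_univ, ← expUnif_comp_equiv e]
  congr 1
  ext ω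
  rw [csEst_eq_medianFin_rowError_add hk, add_sub_cancel_right]
  rfl

end CountSketch

theorem countSketch_multi_row_zipfian_upper_general :
    ∃ C : ℝ, 0 < C ∧
      ∀ k n B : ℕ, 3 ≤ k → 2 ≤ B → ∀ f : Fin n → ℝ, (∀ j, |f j| ≤ zipf j) → ∀ i : Fin n,
        expUnif (fun ω : (Fin k → Fin n → Fin B) × (Fin k → Fin n → Bool) =>
            |csEst f ω.1 ω.2 i - f i|) ≤
          C / ((B : ℝ) * Real.sqrt (k : ℝ)) := by
  have hpos : 0 < medianErrorConst := by rw [medianErrorConst]; positivity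
  refine ⟨4 * medianErrorConst, by positivity, fun k n B hk hB f hf i => ?_⟩
  have : NeZero B := ⟨by omega⟩
  have hB' : (2 : ℝ) ≤ B := mod_cast hB
  obtain ⟨p, hp, hpB⟩ := exists_unitInterval_mul_one_sub_eq (x := 1 / (2 * B)) (by positivity) <| by
    rw [div_le_div_iff₀ (by positivity) (by norm_num)]
    linarith
  have hconc := weaklyConcentrated_weightedSumLaw_bernoulliMeasure hpB hf i
  have hlaw := hasLaw_rowError hp f i
  rw [expUnif_abs_csEst_sub (by omega)]
  refine (integral_abs_medianFin_symmetrization_le hconc (by positivity) hk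
    (iIndepFun_pi fun _ => hlaw.aemeasurable) fun l =>
      hlaw.comp (measurePreserving_eval (fun _ : Fin k => uniformOn Set.univ) l).hasLaw).trans_eq ?_
  field_simp

/-- for odd `k ≥ 3` with `k·B ≤ n` and `k ≤ B`, the expected error
of `k`-row Count-Sketch on Zipfian input is `O(1/(B·√k))`. -/
theorem countSketch_multi_row_zipfian_upper :
    ∃ C : ℝ, 0 < C ∧
      ∀ k n B : ℕ, Odd k → 3 ≤ k → k * B ≤ n → k ≤ B → ∀ i : Fin n,
        expUnif (fun ω : (Fin k → Fin n → Fin B) × (Fin k → Fin n → Bool) =>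
            |csEst zipf ω.1 ω.2 i - zipf i|) ≤
          C / ((B : ℝ) * Real.sqrt (k : ℝ)) := by
  obtain ⟨C, hC, hbound⟩ := countSketch_multi_row_zipfian_upper_general
  exact ⟨C, hC, fun k n B _ hk _ hkB => hbound k n B hk (by omega) zipf fun j =>
    (abs_of_pos (by unfold zipf; positivity)).le⟩
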